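/- Let α : [m] → [n] be a monotone map and Γ : [m+r] → [m] × [r] a maximal chain. Then there exists a unique pair (Γ', β) consisting of a maximal chain Γ' : [n+r] → [n] × [r] and a monotone map β : [m+r] → [n+r] such that Γ'(β(k)) = (α((Γ k).fst), (Γ k).snd) for all k ∈ [m+r]. -/

import Mathlib

theorem chain_sum {n r : ℕ} (Γ : Fin (n + r + 1) → Fin (n + 1) × Fin (r + 1))
    (hm : Monotone Γ) (hi : Function.Injective Γ) (k : Fin (n + r + 1)) :
    ((Γ k).1 : ℕ) + ((Γ k).2 : ℕ) = k := by
  let f : Fin (n + r + 1) → Fin (n + r + 1) :=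
    fun k => ⟨((Γ k).1 : ℕ) + ((Γ k).2 : ℕ), by omega⟩
  have hf : StrictMono f := by
    intro a b hab
    have h1 := hm hab.le
    have h2 : Γ a ≠ Γ b := fun h => hab.ne (hi h)
    have h3 := h1.1
    have h4 := h1.2
    rw [Fin.le_def] at h3 h4
    rw [Ne, Prod.ext_iff, Fin.ext_iff, Fin.ext_iff] at h2
    simp only [f, Fin.lt_def]
    omega
  have h1 : k ≤ f k := hf.le_apply
  have h2 : f k ≤ k := hf.apply_le
  have := congrArg Fin.val (le_antisymm h2 h1)
  exact this

theorem chain_step {n r : ℕ} (Γ : Fin (n + r + 1) → Fin (n + 1) × Fin (r + 1))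
    (hm : Monotone Γ) (hi : Function.Injective Γ) (j : ℕ) (hj : j < r) :
    ∃ k k' : Fin (n + r + 1), (k' : ℕ) = k + 1 ∧ (Γ k).1 = (Γ k').1 ∧
      ((Γ k).2 : ℕ) = j ∧ ((Γ k').2 : ℕ) = j + 1 := by
  have hs := chain_sum Γ hm hi
  have hex : ∃ k : ℕ, ∃ h : k < n + r + 1, j < ((Γ ⟨k, h⟩).2 : ℕ) := by
    refine ⟨n + r, by omega, ?_⟩
    have := hs ⟨n + r, by omega⟩
    simp only at this
    omega
  classical
  obtain ⟨hk, hkj⟩ := Nat.find_spec hex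
  have hmin := fun q => Nat.find_min hex (m := q)
  generalize Nat.find hex = K at *
  have hs1 := hs ⟨K, hk⟩
  simp only at hs1
  obtain ⟨q, rfl⟩ : ∃ q, K = q + 1 := ⟨K - 1, by omega⟩
  have hq : q < n + r + 1 := by omega
  have hs2 := hs ⟨q, hq⟩
  simp only at hs2
  have h3 : ¬ j < ((Γ ⟨q, hq⟩).2 : ℕ) := fun h => hmin q (by omega) ⟨hq, h⟩
  have hle : Γ ⟨q, hq⟩ ≤ Γ ⟨q + 1, hk⟩ := hm (by simp [Fin.le_def])
  have h4 := hle.1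
  have h5 := hle.2
  rw [Fin.le_def] at h4 h5
  refine ⟨⟨q, hq⟩, ⟨q + 1, hk⟩, rfl, Fin.ext ?_, ?_, ?_⟩ <;> omega

theorem sup_fun {ι : Type*} [Fintype ι] (s y : ι → ℕ) :
    ∃ b : ℕ → ℕ, (∀ k t, s k ≤ t → y k ≤ b t) ∧
      ∀ t, b t = 0 ∨ ∃ k, s k ≤ t ∧ y k = b t := by
  classical
  refine ⟨fun t => (Finset.univ.filter (fun k => s k ≤ t)).sup y, ?_, ?_⟩
  · intro k t h
    exact Finset.le_sup (f := y) (by simpa using h)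
  · intro t
    rcases (Finset.univ.filter (fun k => s k ≤ t)).eq_empty_or_nonempty with h | h
    · left; simp only [h, Finset.sup_empty]; rfl
    · right
      obtain ⟨k, hk, e⟩ := Finset.exists_mem_eq_sup _ h y
      exact ⟨k, by simpa using hk, e.symm⟩

/-- Let `α : [m] → [n]` be a monotone map and
`Γ : [m+r] → [m] × [r]` a maximal chain.  Then there exists a unique pair
`(Γ', β)` consisting of a maximal chain `Γ' : [n+r] → [n] × [r]` and a
monotone map `β : [m+r] → [n+r]` such that
`Γ'(β(k)) = (α((Γ k).fst), (Γ k).snd)` for all `k ∈ [m+r]`. -/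
theorem pushforward_exists_unique (n m r : ℕ)
    (α : Fin (m + 1) → Fin (n + 1)) (hαmono : Monotone α)
    (Γ : Fin (m + r + 1) → Fin (m + 1) × Fin (r + 1))
    (hΓmono : Monotone Γ) (hΓinj : Function.Injective Γ) :
    ∃! P : (Fin (n + r + 1) → Fin (n + 1) × Fin (r + 1)) ×
           (Fin (m + r + 1) → Fin (n + r + 1)),
      Monotone P.1 ∧ Function.Injective P.1 ∧ Monotone P.2 ∧
      ∀ k, P.1 (P.2 k) = (α (Γ k).1, (Γ k).2) := by
  have hs := chain_sum Γ hΓmono hΓinj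
  have hstep := chain_step Γ hΓmono hΓinj
  obtain ⟨b, hb1, hb2⟩ := sup_fun (fun k => (α (Γ k).1 : ℕ) + ((Γ k).2 : ℕ))
    (fun k => ((Γ k).2 : ℕ))
  have hmon : ∀ k k', k ≤ k' → (α (Γ k).1 : ℕ) ≤ α (Γ k').1 ∧ ((Γ k).2 : ℕ) ≤ (Γ k').2 :=
    fun k k' h => ⟨hαmono (hΓmono h).1, (hΓmono h).2⟩
  have hbr : ∀ t, b t ≤ r := by
    intro t
    rcases hb2 t with h | ⟨k, h1, h2⟩ <;> omega
  have hbt : ∀ t, b t ≤ t := by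
    intro t
    rcases hb2 t with h | ⟨k, h1, h2⟩ <;> omega
  have hbmono : ∀ t t', t ≤ t' → b t ≤ b t' := by
    intro t t' htt
    rcases hb2 t with h | ⟨k, h1, h2⟩
    · omega
    · have := hb1 k t' (by omega)
      omega
  have hb1step : ∀ t, b (t + 1) ≤ b t + 1 := by
    intro t
    rcases hb2 (t + 1) with h | ⟨k, h1, h2⟩
    · omega
    · by_cases h0 : b (t + 1) = 0
      · omega
      obtain ⟨q, q', e1, e2, e3, e4⟩ := hstep (b (t + 1) - 1) (by have := hbr (t + 1); omega)
      have hqk : q ≤ k := by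
        by_contra hc
        have := (hmon k q (not_le.mp hc).le).2
        omega
      have h5 := hmon q k hqk
      have := hb1 q t (by omega)
      omega
  have hamono : ∀ t t', t ≤ t' → t - b t ≤ t' - b t' := by
    apply monotone_nat_of_le_succ (f := fun t => t - b t)
    intro t
    have := hb1step t
    have := hbt t
    omega
  have han : ∀ t, t ≤ n + r → t - b t ≤ n := by
    intro t ht
    by_cases h : b t = r
    · omega
    · obtain ⟨q, q', e1, e2, e3, e4⟩ := hstep (b t) (by have := hbr t; omega)
      have h1 := hb1 q' t
      have := (α (Γ q').1).isLt
      omega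
  have hbk : ∀ k, b ((α (Γ k).1 : ℕ) + ((Γ k).2 : ℕ)) = (Γ k).2 := by
    intro k
    have h1 := hb1 k _ le_rfl
    rcases hb2 ((α (Γ k).1 : ℕ) + ((Γ k).2 : ℕ)) with h | ⟨k', h2, h3⟩
    · omega
    · rcases le_total k k' with h | h
      · have := hmon _ _ h
        omega
      · have := hmon _ _ h
        omega
  refine ⟨(fun t => (⟨t - b t, by have := han t (by omega); omega⟩,
      ⟨b t, by have := hbr t; omega⟩),
    fun k => ⟨(α (Γ k).1 : ℕ) + ((Γ k).2 : ℕ), by omega⟩), ⟨?_, ?_, ?_, ?_⟩, ?_⟩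
  · intro t t' h
    exact ⟨hamono _ _ h, hbmono _ _ h⟩
  · intro t t' h
    simp only [Prod.mk.injEq, Fin.mk.injEq] at h
    have := hbt t
    have := hbt t'
    apply Fin.ext
    omega
  · intro k k' h
    have := hmon k k' h
    simp only [Fin.le_def]
    omega
  · intro k
    refine Prod.ext (Fin.ext ?_) (Fin.ext ?_)
    · simp only [hbk]; omega
    · simp only [hbk]
  · rintro ⟨G, β⟩ ⟨hG, hGi, hβ, hc⟩
    simp only at hG hGi hβ hc
    have hsG := chain_sum G hG hGi
    have hβv : ∀ k, (β k : ℕ) = (α (Γ k).1 : ℕ) + ((Γ k).2 : ℕ) := by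
      intro k
      rw [← hsG (β k), hc k]
    have hcomp : ∀ t k, (((G t).1 : ℕ) ≤ α (Γ k).1 ∧ ((G t).2 : ℕ) ≤ (Γ k).2) ∨
        ((α (Γ k).1 : ℕ) ≤ (G t).1 ∧ ((Γ k).2 : ℕ) ≤ (G t).2) := by
      intro t k
      rcases le_total t (β k) with h | h
      · left
        have h1 := hG h
        rw [hc k] at h1
        exact ⟨h1.1, h1.2⟩
      · right
        have h1 := hG h
        rw [hc k] at h1
        exact ⟨h1.1, h1.2⟩
    have hb : ∀ t, ((G t).2 : ℕ) = b t := by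
      intro t
      have h0 := hsG t
      apply le_antisymm
      · by_contra hlt
        obtain ⟨q, q', e1, e2, e3, e4⟩ := hstep (b t) (by omega)
        have h1 := hb1 q' t
        have h2 := hcomp t q
        rw [← e2] at h1
        omega
      · rcases hb2 t with h | ⟨k, h1, h2⟩
        · omega
        · have := hcomp t k
          omega
    refine Prod.ext (funext fun t => Prod.ext (Fin.ext ?_) (Fin.ext ?_)) (funext fun k => Fin.ext ?_)
    · have := hsG t
      have := hb t
      simp only
      omega
    · exact hb t
    · exact hβv k
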